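/- Let λ_1 < λ_2 < … < λ_s be positive integers that are linearly independent over non-negative integers, and let f:(ℝ,0)→(ℝ^s,0) be the curve-germ f(t) = (t^{λ_1},…,t^{λ_s}). Suppose Φ:(ℝ^s,0)→(ℝ^s,0) and φ:(ℝ,0)→(ℝ,0) are germs of diffeomorphisms such that Φ(f(t)) = f(φ(t)) for all t in a neighbourhood of 0, and set c = φ'(0) (so c≠0). Then the Jacobian matrix of Φ at 0 is upper triangular with prescribed diagonal: for all indices 1≤j<i≤s the partial derivative ∂Φ_i/∂x_j(0) = 0, and for every i, ∂Φ_i/∂x_i(0) = c^{λ_i}. -/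

import Mathlib

open Filter Topology

noncomputable section

/-- A germ of diffeomorphism of `(ℝ,0)`. -/
def IsDiffeoGerm1 (φ : ℝ → ℝ) : Prop :=
  φ 0 = 0 ∧ (∃ U ∈ 𝓝 (0 : ℝ), ContDiffOn ℝ (⊤ : ℕ∞) φ U) ∧ deriv φ 0 ≠ 0

/-- A germ of diffeomorphism of `(ℝ^m,0)`. -/
def IsDiffeoGerm (m : ℕ) (Φ : (Fin m → ℝ) → (Fin m → ℝ)) : Prop :=
  Φ 0 = 0 ∧ (∃ U ∈ 𝓝 (0 : Fin m → ℝ), ContDiffOn ℝ (⊤ : ℕ∞) Φ U) ∧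
    ∃ D : (Fin m → ℝ) ≃L[ℝ] (Fin m → ℝ),
      HasFDerivAt Φ (D : (Fin m → ℝ) →L[ℝ] (Fin m → ℝ)) 0

/-- Positive integers `λ 0, …, λ (s-1)` are linearly independent over non-negative
integers: no `λ j` is a `ℕ`-linear combination of the others. -/
def LinIndepNonneg {s : ℕ} (lam : Fin s → ℕ) : Prop :=
  ∀ j : Fin s, ∀ c : Fin s → ℕ, lam j ≠ ∑ i ∈ Finset.univ.erase j, c i * lam i

/-!
Everything is read off from the identity `Φ (t ^ λ) = φ(t) ^ μ` by comparing coefficients of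
`t ^ λ_j`. Substituting `x = t ^ λ` in a Taylor expansion of `g = Φ_i` turns a monomial `x ^ a` into
`t ^ (∑ a_k λ_k)`, so by independence of the weights only the linear monomial `x_j` contributes to
`t ^ λ_j`, with coefficient `∂_j g (0)`. No multivariate expansion is needed for this: the recursion
`d/dt g(t ^ λ) = ∑_k λ_k t ^ (λ_k - 1) (∂_k g)(t ^ λ)` lowers the order of the `t`-derivative at `0`
by `λ_k` each time it passes to `∂_k g`. On the other side `φ(t) ^ μ = (c t) ^ μ + o(t ^ μ)`.
When `λ_j ≤ μ`, the coefficient of `t ^ λ_j` is therefore `c ^ μ` if `λ_j = μ`, and `0` otherwise.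
-/

open Asymptotics

section Span

variable {ι : Type*} {lam : ι → ℕ}

lemma mem_span_image_compl_of_lt {n : ℕ} {j : ι} (hn : n ∈ Submodule.span ℕ (Set.range lam))
    (hlt : n < lam j) : n ∈ Submodule.span ℕ (lam '' {j}ᶜ) := by
  have hrange : Set.range lam = insert (lam j) (lam '' {j}ᶜ) := by
    rw [← Set.image_insert_eq, Set.insert_eq, Set.union_compl_self, Set.image_univ]
  obtain ⟨a, m, hm, rfl⟩ := Submodule.mem_span_insert.1 (hrange ▸ hn)
  have ha : a = 0 := by
    by_contra ha
    have : lam j ≤ a * lam j := Nat.le_mul_of_pos_left _ (Nat.pos_of_ne_zero ha)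
    rw [smul_eq_mul] at hlt
    omega
  simpa [ha] using hm

lemma sub_notMem_span_range {j k : ι} (hind : lam j ∉ Submodule.span ℕ (lam '' {j}ᶜ))
    (hkj : k ≠ j) (hk : 0 < lam k) (hle : lam k ≤ lam j) :
    lam j - lam k ∉ Submodule.span ℕ (Set.range lam) := by
  intro hmem
  have hk_mem : lam k ∈ Submodule.span ℕ (lam '' {j}ᶜ) :=
    Submodule.subset_span (Set.mem_image_of_mem lam hkj)
  refine hind ?_
  rw [← Nat.sub_add_cancel hle]
  exact add_mem (mem_span_image_compl_of_lt hmem (by omega)) hk_mem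

end Span

section MonomialCurve

variable {𝕜 ι F : Type*} [NontriviallyNormedField 𝕜] [NormedAddCommGroup F] [NormedSpace 𝕜 F]

lemma contDiffAt_fderiv_apply {E : Type*} [NormedAddCommGroup E] [NormedSpace 𝕜 E] {g : E → F}
    {x : E} {m n : WithTop ℕ∞} (hg : ContDiffAt 𝕜 n g x) (hmn : m + 1 ≤ n) (v : E) :
    ContDiffAt 𝕜 m (fun y => fderiv 𝕜 g y v) x :=
  (hg.fderiv_right hmn).clm_apply contDiffAt_const

lemma iteratedDeriv_pow_smul_zero {g : 𝕜 → F} {n : ℕ} (hg : ContDiffAt 𝕜 n g 0) (k : ℕ) :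
    iteratedDeriv n (fun t => t ^ k • g t) 0 =
      (n.descFactorial k : 𝕜) • iteratedDeriv (n - k) g 0 := by
  have leibniz := iteratedDerivWithin_smul (n := n) (f := fun t : 𝕜 => t ^ k)
    (Set.mem_univ 0) uniqueDiffOn_univ (by fun_prop) hg.contDiffWithinAt
  simp only [iteratedDerivWithin_univ, iteratedDeriv_fun_pow_zero] at leibniz
  refine Eq.trans leibniz ?_
  rw [Finset.sum_eq_single k (fun i _ hik => by simp [hik])
    (fun hk => by simp [Nat.choose_eq_zero_of_lt (by simpa using hk)])]
  rw [if_pos rfl, ← Nat.cast_smul_eq_nsmul 𝕜, smul_smul, Nat.descFactorial_eq_factorial_mul_choose,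
    mul_comm, Nat.cast_mul]

/-- The monomial curve `t ↦ (t ^ λ_i)_i` with weights `λ = lam`. -/
def monomialCurve (lam : ι → ℕ) (t : 𝕜) : ι → 𝕜 := fun i => t ^ lam i

lemma monomialCurve_zero {lam : ι → ℕ} (hpos : ∀ i, 0 < lam i) :
    monomialCurve lam (0 : 𝕜) = 0 :=
  funext fun i => zero_pow (hpos i).ne'

variable [Fintype ι] (lam : ι → ℕ)

lemma contDiff_monomialCurve {n : WithTop ℕ∞} :
    ContDiff 𝕜 n (monomialCurve lam : 𝕜 → ι → 𝕜) :=
  contDiff_pi.2 fun i => contDiff_id.pow (lam i)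

variable {lam} {g : (ι → 𝕜) → F}

lemma contDiffAt_comp_monomialCurve {n : WithTop ℕ∞}
    (hg : ContDiffAt 𝕜 n g (monomialCurve lam 0)) :
    ContDiffAt 𝕜 n (fun t => g (monomialCurve lam t)) 0 :=
  hg.comp 0 (contDiff_monomialCurve lam).contDiffAt

lemma deriv_comp_monomialCurve [DecidableEq ι] {t : 𝕜}
    (hg : DifferentiableAt 𝕜 g (monomialCurve lam t)) :
    deriv (fun t => g (monomialCurve lam t)) t =
      ∑ j, (lam j : 𝕜) • t ^ (lam j - 1) • fderiv 𝕜 g (monomialCurve lam t) (Pi.single j 1) := by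
  have hcurve : HasDerivAt (monomialCurve lam) (fun i => (lam i : 𝕜) * t ^ (lam i - 1)) t :=
    hasDerivAt_pi.2 fun i => hasDerivAt_pow (lam i) t
  refine (hg.hasFDerivAt.comp_hasDerivAt t hcurve).deriv.trans ?_
  rw [pi_eq_sum_univ' fun i => (lam i : 𝕜) * t ^ (lam i - 1), map_sum]
  simp only [map_smul, mul_smul]

lemma iteratedDeriv_succ_comp_monomialCurve [DecidableEq ι] {n : ℕ}
    (hg : ContDiffAt 𝕜 (n + 1 : ℕ) g (monomialCurve lam 0)) :
    iteratedDeriv (n + 1) (fun t => g (monomialCurve lam t)) 0 =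
      ∑ j with 0 < lam j ∧ lam j ≤ n + 1, (lam j * n.descFactorial (lam j - 1) : 𝕜) •
        iteratedDeriv (n + 1 - lam j)
          (fun t => fderiv 𝕜 g (monomialCurve lam t) (Pi.single j 1)) 0 := by
  have hderiv : deriv (fun t => g (monomialCurve lam t)) =ᶠ[𝓝 0] fun t =>
      ∑ j, (lam j : 𝕜) • t ^ (lam j - 1) • fderiv 𝕜 g (monomialCurve lam t) (Pi.single j 1) := by
    have hcont := (contDiff_monomialCurve (𝕜 := 𝕜) lam (n := 0)).continuous.tendsto 0
    filter_upwards [hcont.eventually (hg.eventually (by simp))] with t ht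
    exact deriv_comp_monomialCurve (ht.differentiableAt (by simp))
  have hpartial (j : ι) : ContDiffAt 𝕜 n
      (fun t => fderiv 𝕜 g (monomialCurve lam t) (Pi.single j 1)) 0 :=
    contDiffAt_comp_monomialCurve (contDiffAt_fderiv_apply hg (by simp) _)
  have hterm (j : ι) : ContDiffAt 𝕜 n
      (fun t => t ^ (lam j - 1) • fderiv 𝕜 g (monomialCurve lam t) (Pi.single j 1)) 0 :=
    (contDiffAt_id.pow _).smul (hpartial j)
  rw [iteratedDeriv_succ', hderiv.iteratedDeriv_eq,
    iteratedDeriv_fun_sum fun j _ => (hterm j).const_smul (lam j : 𝕜), Finset.sum_filter]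
  refine Finset.sum_congr rfl fun j _ => ?_
  rw [iteratedDeriv_fun_const_smul_field, iteratedDeriv_pow_smul_zero (hpartial j), smul_smul]
  split_ifs with hj
  · rw [show n - (lam j - 1) = n + 1 - lam j by omega]
  · obtain hzero | hlt : lam j = 0 ∨ n < lam j - 1 := by omega
    · simp [hzero]
    · simp [Nat.descFactorial_eq_zero_iff_lt.2 hlt]

lemma iteratedDeriv_comp_monomialCurve_eq_zero {n : ℕ}
    (hn : n ∉ Submodule.span ℕ (Set.range lam))
    (hg : ContDiffAt 𝕜 n g (monomialCurve lam 0)) :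
    iteratedDeriv n (fun t => g (monomialCurve lam t)) 0 = 0 := by
  classical
  induction n using Nat.strong_induction_on generalizing g with
  | _ n ih =>
    obtain _ | n := n
    · exact absurd (zero_mem _) hn
    rw [iteratedDeriv_succ_comp_monomialCurve hg]
    refine Finset.sum_eq_zero fun j hj => ?_
    obtain ⟨hpos, hle⟩ := (Finset.mem_filter.1 hj).2
    have hsub : n + 1 - lam j ∉ Submodule.span ℕ (Set.range lam) := fun hmem => by
      refine hn (Nat.sub_add_cancel hle ▸ add_mem hmem ?_)
      exact Submodule.subset_span (Set.mem_range_self j)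
    have hpartial := contDiffAt_fderiv_apply hg (m := (n + 1 - lam j : ℕ))
      (by exact_mod_cast (by omega : n + 1 - lam j + 1 ≤ n + 1)) (Pi.single j 1)
    rw [ih _ (by omega) hsub hpartial, smul_zero]

lemma iteratedDeriv_weight_comp_monomialCurve [DecidableEq ι] {j : ι}
    (hind : lam j ∉ Submodule.span ℕ (lam '' {j}ᶜ))
    (hg : ContDiffAt 𝕜 (lam j) g (monomialCurve lam 0)) :
    iteratedDeriv (lam j) (fun t => g (monomialCurve lam t)) 0 =
      ((lam j).factorial : 𝕜) • fderiv 𝕜 g (monomialCurve lam 0) (Pi.single j 1) := by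
  obtain ⟨n, hn⟩ : ∃ n, lam j = n + 1 :=
    Nat.exists_eq_succ_of_ne_zero fun h => hind (h ▸ zero_mem _)
  rw [hn] at hg ⊢
  rw [iteratedDeriv_succ_comp_monomialCurve hg, Finset.sum_eq_single_of_mem j (by simp [hn])]
  · simp [hn, Nat.factorial_succ, Nat.descFactorial_self]
  intro k hk hkj
  obtain ⟨hpos, hle⟩ := (Finset.mem_filter.1 hk).2
  have hsub := sub_notMem_span_range hind hkj hpos (hn ▸ hle)
  have hpartial := contDiffAt_fderiv_apply hg (m := (n + 1 - lam k : ℕ))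
    (by exact_mod_cast (by omega : n + 1 - lam k + 1 ≤ n + 1)) (Pi.single k 1)
  rw [iteratedDeriv_comp_monomialCurve_eq_zero (hn ▸ hsub) hpartial, smul_zero]

end MonomialCurve

section Peano

variable {E : Type*} [NormedAddCommGroup E] [NormedSpace ℝ E]

lemma taylor_isLittleO_of_contDiffAt {f : ℝ → E} {x₀ : ℝ} {n : ℕ} (hf : ContDiffAt ℝ n f x₀) :
    (fun x => f x - ∑ k ∈ Finset.range (n + 1),
      ((k.factorial : ℝ)⁻¹ * (x - x₀) ^ k) • iteratedDeriv k f x₀) =o[𝓝 x₀]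
      fun x => (x - x₀) ^ n := by
  obtain ⟨u, hu, hfu⟩ := hf.contDiffOn le_rfl (by simp)
  obtain ⟨ε, hε, hball⟩ := Metric.mem_nhds_iff.1 (by simpa using hu)
  have hx₀ := Metric.mem_ball_self (x := x₀) hε
  have taylor := taylor_isLittleO (convex_ball x₀ ε) hx₀ (hfu.mono hball)
  rw [Metric.isOpen_ball.nhdsWithin_eq hx₀] at taylor
  simpa only [taylor_within_apply, iteratedDerivWithin_of_isOpen Metric.isOpen_ball hx₀]
    using taylor

lemma eq_zero_of_pow_smul_isLittleO {v : E} {x₀ : ℝ} {n : ℕ}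
    (h : (fun x => (x - x₀) ^ n • v) =o[𝓝 x₀] fun x => (x - x₀) ^ n) : v = 0 := by
  by_contra hv
  have hle : (fun x => (x - x₀) ^ n) =O[𝓝 x₀] fun x => (x - x₀) ^ n • v :=
    IsBigO.of_bound ‖v‖⁻¹ <| .of_forall fun x => by
      rw [norm_smul, mul_comm, mul_inv_cancel_right₀ (norm_ne_zero_iff.2 hv)]
  have hne : ∀ᶠ x in 𝓝[≠] x₀, (x - x₀) ^ n ≠ 0 :=
    eventually_mem_nhdsWithin.mono fun x hx => pow_ne_zero n (sub_ne_zero.2 hx)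
  have hfreq : ∃ᶠ x in 𝓝 x₀, (x - x₀) ^ n ≠ 0 := hne.frequently.filter_mono nhdsWithin_le_nhds
  exact isLittleO_irrefl hfreq (hle.trans_isLittleO h)

lemma iteratedDeriv_eq_zero_of_isLittleO {f : ℝ → E} {x₀ : ℝ} {n : ℕ}
    (hf : ContDiffAt ℝ n f x₀) (h : f =o[𝓝 x₀] fun x => (x - x₀) ^ n) :
    iteratedDeriv n f x₀ = 0 := by
  induction n using Nat.strong_induction_on with
  | _ n ih =>
    have hlower : ∀ k < n, iteratedDeriv k f x₀ = 0 := fun k hk => by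
      have hpow : (fun x => (x - x₀) ^ n) =o[𝓝 x₀] fun x => (x - x₀) ^ k := by
        simpa only [← norm_pow, isLittleO_norm_norm] using isLittleO_pow_sub_pow_sub x₀ hk
      exact ih k hk (hf.of_le (by exact_mod_cast hk.le)) (h.trans hpow)
    have hsum (x : ℝ) : ∑ k ∈ Finset.range (n + 1),
        ((k.factorial : ℝ)⁻¹ * (x - x₀) ^ k) • iteratedDeriv k f x₀ =
        (x - x₀) ^ n • (n.factorial : ℝ)⁻¹ • iteratedDeriv n f x₀ := by
      rw [Finset.sum_range_succ, Finset.sum_eq_zero fun k hk => by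
        rw [hlower k (Finset.mem_range.1 hk), smul_zero], zero_add, mul_comm, mul_smul]
    have taylor := h.sub (taylor_isLittleO_of_contDiffAt hf)
    simp only [hsum, sub_sub_cancel] at taylor
    simpa [n.factorial_ne_zero] using eq_zero_of_pow_smul_isLittleO taylor

lemma iteratedDeriv_eq_factorial_smul_of_isLittleO {f : ℝ → E} {n : ℕ} {a : E}
    (hf : ContDiffAt ℝ n f 0)
    (h : (fun t => f t - t ^ n • a) =o[𝓝 0] fun t => t ^ n) :
    iteratedDeriv n f 0 = (n.factorial : ℝ) • a := by
  have hpow : ContDiffAt ℝ n (fun t : ℝ => t ^ n) 0 := by fun_prop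
  have hsmul : ContDiffAt ℝ n (fun t : ℝ => t ^ n • a) 0 := hpow.smul contDiffAt_const
  have hzero := iteratedDeriv_eq_zero_of_isLittleO (hf.sub hsmul) (by simpa using h)
  have heq := sub_eq_zero.1 ((iteratedDeriv_sub hf hsmul).symm.trans hzero)
  rw [heq, iteratedDeriv_smul_const hpow, iteratedDeriv_fun_pow_zero, if_pos rfl]

end Peano

lemma pow_sub_isLittleO_of_hasDerivAt {𝕜 : Type*} [NontriviallyNormedField 𝕜] {φ : 𝕜 → 𝕜} {c : 𝕜}
    (hφ : HasDerivAt φ c 0) (hφ0 : φ 0 = 0) (n : ℕ) :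
    (fun t => φ t ^ n - t ^ n * c ^ n) =o[𝓝 0] fun t => t ^ n := by
  have hlin : (fun t => φ t - t * c) =o[𝓝 0] fun t => t := by
    simpa [hφ0] using hasDerivAt_iff_isLittleO_nhds_zero.1 hφ
  have hbig : φ =O[𝓝 0] fun t => t := by simpa [hφ0] using hφ.isBigO_sub
  induction n with
  | zero => simp
  | succ n ih =>
    have hmul : (fun t : 𝕜 => t * c) =O[𝓝 0] fun t => t := by
      simpa [mul_comm] using (isBigO_refl (fun t : 𝕜 => t) (𝓝 0)).const_mul_left c
    refine (((hbig.pow n).mul_isLittleO hlin).add (ih.mul_isBigO hmul)).congr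
      (fun t => ?_) (fun t => (pow_succ t n).symm)
    ring

section Symmetry

variable {ι : Type*} [Fintype ι] [DecidableEq ι] {lam : ι → ℕ}

lemma fderiv_single_eq_of_isLittleO {E : Type*} [NormedAddCommGroup E] [NormedSpace ℝ E]
    {g : (ι → ℝ) → E} {j : ι} {a : E} (hind : lam j ∉ Submodule.span ℕ (lam '' {j}ᶜ))
    (hg : ContDiffAt ℝ (lam j) g (monomialCurve lam 0))
    (h : (fun t => g (monomialCurve lam t) - t ^ lam j • a) =o[𝓝 0] fun t => t ^ lam j) :
    fderiv ℝ g (monomialCurve lam 0) (Pi.single j 1) = a := by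
  have hcoeff := iteratedDeriv_eq_factorial_smul_of_isLittleO (contDiffAt_comp_monomialCurve hg) h
  rw [iteratedDeriv_weight_comp_monomialCurve hind hg] at hcoeff
  exact smul_right_injective E (Nat.cast_ne_zero.2 (lam j).factorial_ne_zero) hcoeff

theorem local_symmetry_jacobian_triangular_general {κ : Type*} [Fintype κ] {mu : κ → ℕ}
    (hind : ∀ j, lam j ∉ Submodule.span ℕ (lam '' {j}ᶜ)) {Φ : (ι → ℝ) → κ → ℝ}
    {φ : ℝ → ℝ} {c : ℝ} (hΦ : ∀ j, ContDiffAt ℝ (lam j) Φ 0) (hφ : HasDerivAt φ c 0)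
    (hφ0 : φ 0 = 0) (hconj : ∀ᶠ t in 𝓝 0, Φ (monomialCurve lam t) = monomialCurve mu (φ t)) :
    (∀ k j, lam j < mu k → fderiv ℝ Φ 0 (Pi.single j 1) k = 0) ∧
      ∀ k j, lam j = mu k → fderiv ℝ Φ 0 (Pi.single j 1) k = c ^ mu k := by
  have hpos (j : ι) : 0 < lam j := Nat.pos_of_ne_zero fun h => hind j (h ▸ zero_mem _)
  have hbase : monomialCurve lam (0 : ℝ) = 0 := monomialCurve_zero hpos
  have hcoord (k : κ) (j : ι) (a : ℝ)
      (h : (fun t => φ t ^ mu k - t ^ lam j * a) =o[𝓝 0] fun t => t ^ lam j) :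
      fderiv ℝ Φ 0 (Pi.single j 1) k = a := by
    have hdiff : DifferentiableAt ℝ Φ 0 :=
      (hΦ j).differentiableAt (by exact_mod_cast (hpos j).ne')
    have hexp : (fun t => Φ (monomialCurve lam t) k - t ^ lam j • a) =o[𝓝 0] fun t => t ^ lam j :=
      h.congr' (hconj.mono fun t ht => by simp [ht, monomialCurve]) .rfl
    have hpartial := fderiv_single_eq_of_isLittleO (g := fun x => Φ x k) (hind j)
      (hbase ▸ contDiffAt_pi.1 (hΦ j) k) hexp
    rwa [hbase, fderiv_apply hdiff] at hpartial
  have hpow (k : κ) := pow_sub_isLittleO_of_hasDerivAt hφ hφ0 (mu k)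
  refine ⟨fun k j hlt => hcoord k j 0 ?_, fun k j heq => hcoord k j _ (heq ▸ hpow k)⟩
  have hbig : φ =O[𝓝 0] fun t => t := by simpa [hφ0] using hφ.isBigO_sub
  simpa using (hbig.pow (mu k)).trans_isLittleO (isLittleO_pow_pow hlt)

end Symmetry

lemma LinIndepNonneg.notMem_span {s : ℕ} {lam : Fin s → ℕ} (hind : LinIndepNonneg lam)
    (j : Fin s) : lam j ∉ Submodule.span ℕ (lam '' {j}ᶜ) := by
  have hcompl : ({j}ᶜ : Set (Fin s)) = ↑(Finset.univ.erase j) := by ext; simp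
  rw [hcompl, Submodule.mem_span_image_finset_iff_exists_fun']
  rintro ⟨c, hc⟩
  exact hind j c hc.symm

lemma IsDiffeoGerm1.hasDerivAt {φ : ℝ → ℝ} (hφ : IsDiffeoGerm1 φ) :
    HasDerivAt φ (deriv φ 0) 0 :=
  (differentiableAt_of_deriv_ne_zero hφ.2.2).hasDerivAt

lemma IsDiffeoGerm.contDiffAt {m : ℕ} {Φ : (Fin m → ℝ) → (Fin m → ℝ)} (hΦ : IsDiffeoGerm m Φ) :
    ContDiffAt ℝ (⊤ : ℕ∞) Φ 0 :=
  let ⟨_, ⟨_, hU, hΦU⟩, _⟩ := hΦ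
  hΦU.contDiffAt hU

/-- Local symmetries of the monomial curve `f(t) = (t^{λ₁},…,t^{λ_s})` have upper
triangular Jacobian matrix at `0`, with diagonal entries `c^{λ_i}` where `c = φ'(0)`. -/
theorem local_symmetry_jacobian_triangular (s : ℕ) (lam : Fin s → ℕ)
    (hpos : ∀ i, 0 < lam i) (hmono : StrictMono lam) (hind : LinIndepNonneg lam)
    (Φ : (Fin s → ℝ) → (Fin s → ℝ)) (φ : ℝ → ℝ)
    (hΦ : IsDiffeoGerm s Φ) (hφ : IsDiffeoGerm1 φ)
    (hconj : ∀ᶠ t in 𝓝 (0 : ℝ), Φ (fun i => t ^ lam i) = fun i => (φ t) ^ lam i) :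
    deriv φ 0 ≠ 0 ∧
    (∀ i j : Fin s, j < i → fderiv ℝ Φ 0 (Pi.single j 1) i = 0) ∧
    (∀ i : Fin s, fderiv ℝ Φ 0 (Pi.single i 1) i = (deriv φ 0) ^ lam i) := by
  have ⟨hlower, hdiag⟩ := local_symmetry_jacobian_triangular_general hind.notMem_span
    (fun _ => hΦ.contDiffAt.of_le (by exact_mod_cast le_top)) hφ.hasDerivAt hφ.1 hconj
  exact ⟨hφ.2.2, fun i j hji => hlower i j (hmono hji), fun i => hdiag i i rfl⟩
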